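/- (Molien–Weyl formula for noncommutative invariants.) Fix d ≥ 1 and let d_m = dim T^m(R_d^*)^G be the dimension of the space of SL(2,ℂ)-invariant m-linear forms on binary forms of degree d. Then for every real z with |z| < 1/(d+1), the Hilbert–Poincaré series H_d(z) = Σ_{m≥0} d_m z^m converges and equals (2/π) ∫₀^π sin²x / (1 − z·sin((d+1)x)/sin x) dx. -/

import Mathlib

/-!
The `m`-th coefficient is computed by the highest-weight method for `sl₂`; no integration over
the group is needed.

Evaluating an `m`-linear form on a suitably normalized monomial basis identifies it with a
function on words `w : Fin m → Fin (d + 1)` (`coeffs`). Since `SL(2, ℂ)` is generated by its two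
unipotent one-parameter subgroups, a form is invariant iff it is killed by the corresponding
derivations (`mem_invariantForms_iff`): along the flow `exp (t N)` the value of the form has
derivative given by the derivation of `N`. On functions on words these derivations become
operators `E = total m (raise d)` and `F = total m (raise d)ᴴ`, which are adjoint to each other for
the standard inner product and satisfy `E F - F E = H`, where `H` multiplies by the weight of a
word.

For such a pair, `E` maps weight `0` to weight `2` with kernel `ker E ∩ ker F`, since
`⟨F c, F c⟩ = ⟨c, E F c⟩ = ⟨c, F E c⟩` in weight `0`. It is onto: `E F` is injective on the weight
`2` space, as `E F v = 0` forces `⟨E v, E v⟩ = -2 ⟨v, v⟩`. Hence `d_m` is the number of words of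
weight `0` minus the number of words of weight `2` (`finrank_invariantForms`).

On the analytic side, `sin ((d + 1) x) / sin x` is the character `∑ k, cos ((2 k - d) x)`, whose
`m`-th power is the sum of `cos (weight w * x)` over words. Orthogonality of cosines on `[0, π]`
turns the `m`-th moment against `(2 / π) sin² x` into the same difference of counts
(`integral_character_pow`), and dominated convergence sums the geometric series.
-/

/-- The binary form of degree `d` with (normalized) coefficients `ξ`, evaluated at the
vector `v ∈ ℂ²`:  `p_ξ(v) = Σ_{k=0}^{d} binom(d,k) ξ_k v₀^k v₁^{d−k}`.
The coefficient vector `ξ : Fin (d+1) → ℂ` is a faithful model of the space `R_d`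
of binary forms of degree `d`. -/
noncomputable def Pval (d : ℕ) (ξ : Fin (d + 1) → ℂ) (v : Fin 2 → ℂ) : ℂ :=
  ∑ k : Fin (d + 1), (d.choose (k : ℕ) : ℂ) * ξ k * v 0 ^ (k : ℕ) * v 1 ^ (d - (k : ℕ))

/-- The space `T^m(R_d^*)^G` of `SL(2,ℂ)`-invariant `m`-linear forms on the space `R_d`
of binary forms of degree `d` (modelled by coefficient vectors in `Fin (d+1) → ℂ`).
Invariance of `F` means `F(g·p₁, ..., g·p_m) = F(p₁, ..., p_m)` for every `g ∈ SL(2,ℂ)`,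
where `(g·p)(v) = p(g⁻¹·v)`; here `g·p_{ξ i} = p_{η i}` is expressed through the
evaluations `Pval`. -/
noncomputable def invariantForms (d m : ℕ) :
    Submodule ℂ (MultilinearMap ℂ (fun _ : Fin m => (Fin (d + 1) → ℂ)) ℂ) where
  carrier := {F | ∀ g : Matrix.SpecialLinearGroup (Fin 2) ℂ,
    ∀ ξ η : Fin m → (Fin (d + 1) → ℂ),
      (∀ i v, Pval d (η i) v = Pval d (ξ i)
          (((g⁻¹ : Matrix.SpecialLinearGroup (Fin 2) ℂ) : Matrix (Fin 2) (Fin 2) ℂ).mulVec v)) →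
      F η = F ξ}
  add_mem' := by
    intro F G hF hG g ξ η h
    simp only [MultilinearMap.add_apply, hF g ξ η h, hG g ξ η h]
  zero_mem' := by intro g ξ η h; simp
  smul_mem' := by
    intro c F hF g ξ η h
    simp only [MultilinearMap.smul_apply, hF g ξ η h]

/-! ### An `sl₂`-pair of mutually adjoint operators -/

open scoped ComplexOrder in
theorem star_dot_self_zero {W : Type*} [Fintype W] {u : W → ℂ} (h : star u ⬝ᵥ u = 0) : u = 0 :=
  dotProduct_star_self_eq_zero.mp h

/-- Functions on `W` supported on the elements of weight `a`. -/
def weightSpace {W : Type*} (wt : W → ℤ) (a : ℤ) : Submodule ℂ (W → ℂ) where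
  carrier := {c | ∀ w, wt w ≠ a → c w = 0}
  add_mem' := by
    intro c c' h h' w hw
    simp [h w hw, h' w hw]
  zero_mem' := by intro w _; rfl
  smul_mem' := by
    intro r c h w hw
    simp [h w hw]

theorem finrank_weightSpace {W : Type*} [Fintype W] (wt : W → ℤ) (a : ℤ) :
    Module.finrank ℂ (weightSpace wt a) = Fintype.card {w // wt w = a} := by
  classical
  let e : weightSpace wt a ≃ₗ[ℂ] ({w // wt w = a} → ℂ) :=
    { toFun := fun c w => c.1 w.1
      map_add' := fun _ _ => rfl
      map_smul' := fun _ _ => rfl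
      invFun := fun f => ⟨fun w => if h : wt w = a then f ⟨w, h⟩ else 0,
        fun w hw => by simp [hw]⟩
      left_inv := by
        intro c
        ext w
        by_cases h : wt w = a
        · simp [h]
        · simp [h, c.2 w h]
      right_inv := by
        intro f
        ext w
        simp [w.2] }
  rw [e.finrank_eq, Module.finrank_fintype_fun_eq_card]

open scoped ComplexOrder in
/-- For mutually adjoint `E`, `F` shifting the weight by `2` and `-2`, whose commutator multiplies by
the weight, `E` maps weight `0` onto weight `2` with kernel `ker E ⊓ ker F`. -/
theorem finrank_ker_inf_ker {W : Type*} [Fintype W] (wt : W → ℤ)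
    (E F : (W → ℂ) →ₗ[ℂ] (W → ℂ))
    (hF : ∀ u v, star (F u) ⬝ᵥ v = star u ⬝ᵥ E v)
    (hE : ∀ u v, star (E u) ⬝ᵥ v = star u ⬝ᵥ F v)
    (hH : ∀ c w, E (F c) w - F (E c) w = (wt w : ℂ) * c w)
    (hsE : ∀ c w, E (fun w' => (wt w' : ℂ) * c w') w = ((wt w : ℂ) - 2) * E c w)
    (hsF : ∀ c w, F (fun w' => (wt w' : ℂ) * c w') w = ((wt w : ℂ) + 2) * F c w) :
    Module.finrank ℂ (LinearMap.ker E ⊓ LinearMap.ker F : Submodule ℂ (W → ℂ))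
      + Fintype.card {w // wt w = 2} = Fintype.card {w // wt w = 0} := by
  have hsc : ∀ {a : ℤ} {c : W → ℂ}, c ∈ weightSpace wt a →
      (fun w' => (wt w' : ℂ) * c w') = (a : ℂ) • c := by
    intro a c hc
    ext w
    by_cases h : wt w = a
    · simp [h]
    · simp [hc w h]
  have hE02 : ∀ c ∈ weightSpace wt 0, E c ∈ weightSpace wt 2 := by
    intro c hc w hw
    have h := hsE c w
    rw [hsc hc] at h
    have h2 : ((wt w : ℂ) - 2) ≠ 0 := by
      rw [sub_ne_zero]; exact_mod_cast hw
    simpa [h2] using h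
  have hF20 : ∀ c ∈ weightSpace wt 2, F c ∈ weightSpace wt 0 := by
    intro c hc w hw
    have h := hsF c w
    rw [hsc hc] at h
    have h2 : (wt w : ℂ) ≠ 0 := by exact_mod_cast hw
    rw [map_smul, Pi.smul_apply, smul_eq_mul] at h
    push_cast at h
    have : (wt w : ℂ) * F c w = 0 := by linear_combination -h
    simpa [h2] using this
  let E' : weightSpace wt 0 →ₗ[ℂ] weightSpace wt 2 := E.restrict hE02
  let F' : weightSpace wt 2 →ₗ[ℂ] weightSpace wt 0 := F.restrict hF20
  have hinj : Function.Injective (E' ∘ₗ F') := by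
    rw [injective_iff_map_eq_zero]
    rintro ⟨v, hv⟩ h
    have h1 : E (F v) = 0 := congrArg Subtype.val h
    have h2 : - F (E v) = (2 : ℂ) • v := by
      have := hsc hv
      ext w
      have h3 := hH v w
      have h4 := congrFun this w
      rw [h1] at h3
      rw [← h3] at h4
      simpa using h4
    have h3 : star (E v) ⬝ᵥ E v = - (2 * (star v ⬝ᵥ v)) := by
      rw [hE, ← neg_neg (F (E v)), h2]
      simp
    have p1 : 0 ≤ star (E v) ⬝ᵥ E v := dotProduct_star_self_nonneg _ 
    have p2 : 0 ≤ star v ⬝ᵥ v := dotProduct_star_self_nonneg _ 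
    have : star v ⬝ᵥ v = 0 := by
      rw [h3] at p1
      rw [Complex.le_def] at p1 p2
      apply Complex.ext
      · simp at p1 p2 ⊢; linarith
      · simpa using p2.2.symm
    exact Subtype.ext (star_dot_self_zero this)
  have hsurj : Function.Surjective E' := by
    have := LinearMap.injective_iff_surjective.mp hinj
    exact Function.Surjective.of_comp (f := E') (g := F') this
  have hker : (LinearMap.ker E').map (weightSpace wt 0).subtype
      = LinearMap.ker E ⊓ LinearMap.ker F := by
    ext c
    simp only [Submodule.mem_map, LinearMap.mem_ker, Submodule.mem_inf]
    constructor
    · rintro ⟨⟨c, hc⟩, h, rfl⟩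
      have h1 : E c = 0 := congrArg Subtype.val h
      refine ⟨h1, ?_⟩
      apply star_dot_self_zero
      rw [Submodule.subtype_apply, hF]
      have : E (F c) = 0 := by
        ext w
        have := hH c w
        have h4 := congrFun (hsc hc) w
        simp [h1] at this h4 ⊢
        rw [this]
        simpa using h4
      simp [this]
    · rintro ⟨h1, h2⟩
      refine ⟨⟨c, ?_⟩, Subtype.ext h1, rfl⟩
      intro w hw
      have := hH c w
      rw [h1, h2] at this
      have hw' : (wt w : ℂ) ≠ 0 := by exact_mod_cast hw
      simpa [hw'] using this
  have hrn := LinearMap.finrank_range_add_finrank_ker E'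
  rw [LinearMap.range_eq_top.mpr hsurj, finrank_top, finrank_weightSpace, finrank_weightSpace] at hrn
  rw [← hker, Submodule.finrank_map_subtype_eq]
  omega

/-! ### Derivations on functions on words -/

/-- The matrix `A` acting in the `i`-th letter of a word, identically in the others. The row index
of `A` is the letter that is read and the column index the letter replacing it. -/
noncomputable def slot {m n : ℕ} (A : Matrix (Fin n) (Fin n) ℂ) (i : Fin m) :
    ((Fin m → Fin n) → ℂ) →ₗ[ℂ] ((Fin m → Fin n) → ℂ) where
  toFun c w := ∑ k, A (w i) k * c (Function.update w i k)
  map_add' c c' := by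
    ext w
    simp [mul_add, Finset.sum_add_distrib]
  map_smul' r c := by
    ext w
    simp only [Pi.smul_apply, smul_eq_mul, Finset.mul_sum, RingHom.id_apply]
    exact Finset.sum_congr rfl fun k _ => by ring

theorem slot_apply {m n : ℕ} (A : Matrix (Fin n) (Fin n) ℂ) (i : Fin m)
    (c : (Fin m → Fin n) → ℂ) (w : Fin m → Fin n) :
    slot A i c w = ∑ k, A (w i) k * c (Function.update w i k) := rfl

theorem slot_mul {m n : ℕ} (A B : Matrix (Fin n) (Fin n) ℂ) (i : Fin m)
    (c : (Fin m → Fin n) → ℂ) : slot A i (slot B i c) = slot (A * B) i c := by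
  ext w
  simp only [slot_apply, Function.update_self, Function.update_idem, Matrix.mul_apply,
    Finset.mul_sum, Finset.sum_mul]
  rw [Finset.sum_comm]
  exact Finset.sum_congr rfl fun _ _ => Finset.sum_congr rfl fun _ _ => by ring

theorem slot_comm {m n : ℕ} (A B : Matrix (Fin n) (Fin n) ℂ) {i j : Fin m} (hij : i ≠ j)
    (c : (Fin m → Fin n) → ℂ) : slot A i (slot B j c) = slot B j (slot A i c) := by
  ext w
  simp only [slot_apply, Finset.mul_sum, Function.update_of_ne hij, Function.update_of_ne hij.symm]
  rw [Finset.sum_comm]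
  refine Finset.sum_congr rfl fun k _ => Finset.sum_congr rfl fun l _ => ?_
  rw [Function.update_comm hij]
  ring

theorem slot_adjoint {m n : ℕ} (A : Matrix (Fin n) (Fin n) ℂ) (i : Fin m)
    (u v : (Fin m → Fin n) → ℂ) :
    star (slot A.conjTranspose i u) ⬝ᵥ v = star u ⬝ᵥ slot A i v := by
  simp only [dotProduct, Pi.star_apply, slot_apply, star_sum, star_mul', Finset.sum_mul,
    Finset.mul_sum, Matrix.conjTranspose_apply, star_star]
  rw [← Finset.sum_product', ← Finset.sum_product']
  -- the involution exchanging the letter in slot `i` with the summation index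
  refine Finset.sum_nbij' (fun p => (Function.update p.1 i p.2, p.1 i))
    (fun p => (Function.update p.1 i p.2, p.1 i)) ?_ ?_ ?_ ?_ ?_
  · simp
  · simp
  · simp
  · simp
  · rintro ⟨w, k⟩ -
    simp
    ring

/-- The derivation induced by `A`: the sum over all slots of `A` acting in that slot. -/
noncomputable def total {n : ℕ} (m : ℕ) (A : Matrix (Fin n) (Fin n) ℂ) :
    ((Fin m → Fin n) → ℂ) →ₗ[ℂ] ((Fin m → Fin n) → ℂ) := ∑ i, slot A i

theorem total_apply {m n : ℕ} (A : Matrix (Fin n) (Fin n) ℂ) (c : (Fin m → Fin n) → ℂ) :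
    total m A c = ∑ i, slot A i c := by
  simp [total]

theorem total_apply_apply {m n : ℕ} (A : Matrix (Fin n) (Fin n) ℂ) (c : (Fin m → Fin n) → ℂ)
    (w : Fin m → Fin n) :
    total m A c w = ∑ i, ∑ k, A (w i) k * c (Function.update w i k) := by
  simp [total_apply, slot_apply]

theorem total_commutator {m n : ℕ} (A B : Matrix (Fin n) (Fin n) ℂ) (c : (Fin m → Fin n) → ℂ) :
    total m A (total m B c) - total m B (total m A c) = total m (A * B - B * A) c := by
  simp only [total_apply, map_sum]
  rw [Finset.sum_comm, ← Finset.sum_sub_distrib]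
  refine Finset.sum_congr rfl fun i _ => ?_
  rw [← Finset.sum_sub_distrib, Finset.sum_eq_single i]
  · rw [slot_mul, slot_mul]
    ext w
    simp [slot_apply, sub_mul, Finset.sum_sub_distrib]
  · intro j _ hj
    rw [slot_comm _ _ hj, sub_self]
  · simp

theorem total_adjoint {m n : ℕ} (A : Matrix (Fin n) (Fin n) ℂ) (u v : (Fin m → Fin n) → ℂ) :
    star (total m A.conjTranspose u) ⬝ᵥ v = star u ⬝ᵥ total m A v := by
  simp only [total_apply, star_sum, sum_dotProduct, dotProduct_sum, slot_adjoint]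

theorem total_diagonal {m n : ℕ} (a : Fin n → ℂ) (c : (Fin m → Fin n) → ℂ) (w : Fin m → Fin n) :
    total m (Matrix.diagonal a) c w = (∑ i, a (w i)) * c w := by
  simp [total_apply_apply, Matrix.diagonal_apply, Finset.sum_mul]

/-- The normalized `sl₂` raising operator on functions of one letter: the subdiagonal matrix with
entry `√(j (d - j + 1))` at `(j, j - 1)`. -/
noncomputable def raise (d : ℕ) : Matrix (Fin (d + 1)) (Fin (d + 1)) ℂ := fun j k =>
  if (k : ℕ) + 1 = j then ((√((j : ℝ) * ((d : ℝ) - j + 1)) : ℝ) : ℂ) else 0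

theorem raise_sq (d j : ℕ) (hj : j ≤ d + 1) :
    ((√((j : ℝ) * ((d : ℝ) - j + 1)) : ℝ) : ℂ) * ((√((j : ℝ) * ((d : ℝ) - j + 1)) : ℝ) : ℂ)
      = (j : ℂ) * ((d : ℂ) - j + 1) := by
  rw [← Complex.ofReal_mul, Real.mul_self_sqrt]
  · push_cast; ring
  · have : (j : ℝ) ≤ d + 1 := by exact_mod_cast hj
    exact mul_nonneg (by positivity) (by linarith)

theorem raise_conjTranspose_apply (d : ℕ) (j k : Fin (d + 1)) :
    (raise d).conjTranspose j k = raise d k j := by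
  simp only [Matrix.conjTranspose_apply, raise]
  split_ifs <;> simp

theorem raise_mul (d : ℕ) : raise d * (raise d).conjTranspose =
    Matrix.diagonal fun j : Fin (d + 1) => (j : ℂ) * ((d : ℂ) - j + 1) := by
  ext j l
  simp only [Matrix.mul_apply, raise_conjTranspose_apply]
  rcases Nat.eq_zero_or_pos (j : ℕ) with h0 | h0
  · rw [Finset.sum_eq_zero]
    · simp [Matrix.diagonal_apply, h0]
    · intro k _
      simp [raise, h0]
  · have hlt : (j : ℕ) - 1 < d + 1 := by omega
    rw [Finset.sum_eq_single ⟨j - 1, hlt⟩]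
    · by_cases hjl : j = l
      · subst hjl
        rw [Matrix.diagonal_apply_eq, ← raise_sq d j (by omega)]
        simp [raise, Nat.sub_add_cancel h0]
      · have : ¬ ((j : ℕ) = l) := fun h => hjl (Fin.ext h)
        simp [hjl, raise, Nat.sub_add_cancel h0, this]
    · intro k _ hk
      have : ¬ ((k : ℕ) + 1 = j) := fun h => hk (Fin.ext (by simp; omega))
      simp [raise, this]
    · simp

theorem mul_raise (d : ℕ) : (raise d).conjTranspose * raise d =
    Matrix.diagonal fun j : Fin (d + 1) => ((j : ℂ) + 1) * ((d : ℂ) - j) := by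
  ext j l
  simp only [Matrix.mul_apply, raise_conjTranspose_apply]
  rcases Nat.eq_or_lt_of_le (Nat.le_of_lt_succ j.2) with h0 | h0
  · rw [Finset.sum_eq_zero]
    · simp [Matrix.diagonal_apply, h0]
    · intro k _
      have : ¬ ((j : ℕ) + 1 = k) := by omega
      simp [raise, this]
  · rw [Finset.sum_eq_single ⟨j + 1, by omega⟩]
    · by_cases hjl : j = l
      · subst hjl
        have := raise_sq d (j + 1) (by omega)
        rw [Matrix.diagonal_apply_eq]
        simp only [raise, if_true]
        rw [this]
        push_cast
        ring
      · have : ¬ ((l : ℕ) = j) := fun h => hjl (Fin.ext h.symm)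
        simp [hjl, raise, this]
    · intro k _ hk
      have : ¬ ((j : ℕ) + 1 = k) := fun h => hk (Fin.ext (by simp; omega))
      simp [raise, this]
    · simp

/-- The weight of a word under the diagonal torus, the letter `k` having weight `2 k - d`. -/
def weight {d m : ℕ} (w : Fin m → Fin (d + 1)) : ℤ := ∑ i, (2 * ((w i : ℕ) : ℤ) - d)

theorem weight_update {d m : ℕ} (w : Fin m → Fin (d + 1)) (i : Fin m) (k : Fin (d + 1)) :
    weight (Function.update w i k) = weight w + 2 * ((k : ℕ) : ℤ) - 2 * ((w i : ℕ) : ℤ) := by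
  have h : ∀ w : Fin m → Fin (d + 1), weight w
      = (2 * ((w i : ℕ) : ℤ) - d) + ∑ j ∈ Finset.univ.erase i, (2 * ((w j : ℕ) : ℤ) - d) := by
    intro w
    exact (Finset.add_sum_erase _ (fun j => 2 * ((w j : ℕ) : ℤ) - (d : ℤ)) (Finset.mem_univ i)).symm
  rw [h (Function.update w i k), h w, Function.update_self,
    Finset.sum_congr rfl fun j hj => by rw [Function.update_of_ne (Finset.ne_of_mem_erase hj)]]
  ring

theorem total_raise_commutator {d m : ℕ} (c : (Fin m → Fin (d + 1)) → ℂ)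
    (w : Fin m → Fin (d + 1)) :
    total m (raise d) (total m (raise d).conjTranspose c) w
      - total m (raise d).conjTranspose (total m (raise d) c) w = (weight w : ℂ) * c w := by
  rw [← Pi.sub_apply, total_commutator, raise_mul, mul_raise, Matrix.diagonal_sub, total_diagonal]
  congr 1
  rw [weight]
  push_cast
  exact Finset.sum_congr rfl fun _ _ => by ring

theorem total_raise_weight {d m : ℕ} (c : (Fin m → Fin (d + 1)) → ℂ) (w : Fin m → Fin (d + 1)) :
    total m (raise d) (fun w' => (weight w' : ℂ) * c w') w
      = ((weight w : ℂ) - 2) * total m (raise d) c w := by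
  simp only [total_apply_apply, Finset.mul_sum]
  refine Finset.sum_congr rfl fun i _ => Finset.sum_congr rfl fun k _ => ?_
  by_cases h : (k : ℕ) + 1 = w i
  · rw [weight_update, ← h]
    push_cast
    ring
  · simp [raise, h]

theorem total_lower_weight {d m : ℕ} (c : (Fin m → Fin (d + 1)) → ℂ) (w : Fin m → Fin (d + 1)) :
    total m (raise d).conjTranspose (fun w' => (weight w' : ℂ) * c w') w
      = ((weight w : ℂ) + 2) * total m (raise d).conjTranspose c w := by
  simp only [total_apply_apply, Finset.mul_sum]
  refine Finset.sum_congr rfl fun i _ => Finset.sum_congr rfl fun k _ => ?_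
  rw [raise_conjTranspose_apply]
  by_cases h : (w i : ℕ) + 1 = k
  · rw [weight_update, ← h]
    push_cast
    ring
  · simp [raise, h]

/-! ### Binary forms in the normalized monomial basis -/

theorem isUnit_choose_sqrt_inv (d : ℕ) (k : Fin (d + 1)) :
    IsUnit (((√(d.choose k : ℝ))⁻¹ : ℝ) : ℂ) := by
  have : 0 < d.choose k := Nat.choose_pos (Nat.le_of_lt_succ k.2)
  rw [isUnit_iff_ne_zero, Complex.ofReal_ne_zero]
  positivity

/-- The basis of `R_d` whose `k`-th element is the form `√(d choose k) v₀^k v₁^(d-k)`, that is, the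
coefficient vector `e_k / √(d choose k)`. In this basis the two nilpotent generators of `sl₂` act by
mutually adjoint matrices. -/
noncomputable def formBasis (d : ℕ) : Module.Basis (Fin (d + 1)) ℂ (Fin (d + 1) → ℂ) :=
  (Pi.basisFun ℂ (Fin (d + 1))).isUnitSMul (isUnit_choose_sqrt_inv d)

/-- The form `√(d choose k) v₀^k v₁^(d-k)` as a function of `v`. -/
noncomputable def scaledMonomial (d : ℕ) (k : ℕ) (v : Fin 2 → ℂ) : ℂ :=
  ((√(d.choose k : ℝ) : ℝ) : ℂ) * v 0 ^ k * v 1 ^ (d - k)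

theorem formBasis_sum (d : ℕ) (x : Fin (d + 1) → ℂ) (j : Fin (d + 1)) :
    (∑ k, x k • formBasis d k) j = x j * (((√(d.choose j : ℝ))⁻¹ : ℝ) : ℂ) := by
  simp [formBasis, Module.Basis.isUnitSMul_apply, Finset.sum_apply, Pi.single_apply]

theorem Pval_sum (d : ℕ) (x : Fin (d + 1) → ℂ) (v : Fin 2 → ℂ) :
    Pval d (∑ k, x k • formBasis d k) v = ∑ k, x k * scaledMonomial d k v := by
  refine Finset.sum_congr rfl fun k _ => ?_
  rw [formBasis_sum, scaledMonomial]
  have h : ((√(d.choose k : ℝ) : ℝ) : ℂ) * ((√(d.choose k : ℝ) : ℝ) : ℂ) = d.choose k := by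
    rw [← Complex.ofReal_mul, Real.mul_self_sqrt (by positivity)]
    simp
  have h0 : ((√(d.choose k : ℝ) : ℝ) : ℂ) ≠ 0 := by
    have : 0 < d.choose k := Nat.choose_pos (Nat.le_of_lt_succ k.2)
    rw [Complex.ofReal_ne_zero]
    positivity
  rw [← h]
  push_cast
  field_simp

theorem Pval_eq (d : ℕ) (ξ : Fin (d + 1) → ℂ) (v : Fin 2 → ℂ) :
    Pval d ξ v = ∑ k, (formBasis d).repr ξ k * scaledMonomial d k v := by
  rw [← Pval_sum, (formBasis d).sum_repr]

theorem Pval_injective (d : ℕ) {ξ η : Fin (d + 1) → ℂ} (h : ∀ v, Pval d ξ v = Pval d η v) :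
    ξ = η := by
  have hp : (∑ k : Fin (d + 1), Polynomial.monomial (k : ℕ) ((d.choose k : ℂ) * ξ k))
      = ∑ k : Fin (d + 1), Polynomial.monomial (k : ℕ) ((d.choose k : ℂ) * η k) := by
    refine Polynomial.funext fun t => ?_
    have := h ![t, 1]
    simpa [Pval, Polynomial.eval_finsetSum] using this
  ext j
  have hc := congrArg (fun p => Polynomial.coeff p (j : ℕ)) hp
  have h0 : (d.choose j : ℂ) ≠ 0 := by
    exact_mod_cast (Nat.choose_pos (Nat.le_of_lt_succ j.2)).ne'
  simpa [Polynomial.finsetSum_coeff, Polynomial.coeff_monomial, Fin.val_inj, h0] using hc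

/-- The endomorphism of `R_d` sending the `k`-th basis form to the combination of basis forms given
by the `k`-th row of `A`. -/
noncomputable def matOp {d : ℕ} (A : Matrix (Fin (d + 1)) (Fin (d + 1)) ℂ) :
    (Fin (d + 1) → ℂ) →ₗ[ℂ] (Fin (d + 1) → ℂ) :=
  (formBasis d).constr ℂ fun k => ∑ j, A k j • formBasis d j

theorem matOp_basis {d : ℕ} (A : Matrix (Fin (d + 1)) (Fin (d + 1)) ℂ) (k : Fin (d + 1)) :
    matOp A (formBasis d k) = ∑ j, A k j • formBasis d j := by
  simp [matOp]

theorem Pval_matOp {d : ℕ} (A : Matrix (Fin (d + 1)) (Fin (d + 1)) ℂ) (ξ : Fin (d + 1) → ℂ)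
    (v : Fin 2 → ℂ) :
    Pval d (matOp A ξ) v = ∑ k, (formBasis d).repr ξ k * ∑ j, A k j * scaledMonomial d j v := by
  have : matOp A ξ = ∑ j, (∑ k, (formBasis d).repr ξ k * A k j) • formBasis d j := by
    conv_lhs => rw [← (formBasis d).sum_repr ξ]
    simp only [map_sum, map_smul, matOp_basis, Finset.smul_sum, Finset.sum_smul, smul_smul]
    exact Finset.sum_comm
  rw [this, Pval_sum]
  simp only [Finset.sum_mul, Finset.mul_sum, mul_assoc]
  exact Finset.sum_comm

/-- `A` is the infinitesimal generator on `R_d` of the substitutions `v ↦ v + s • n v`: along this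
line of vectors, the derivative of each basis form is its image under `matOp A`. -/
def Generates {d : ℕ} (A : Matrix (Fin (d + 1)) (Fin (d + 1)) ℂ)
    (n : Matrix (Fin 2) (Fin 2) ℂ) : Prop :=
  ∀ (k : Fin (d + 1)) (v : Fin 2 → ℂ) (t : ℂ),
    HasDerivAt (fun s : ℂ => scaledMonomial d k (v + s • n.mulVec v))
      (∑ j, A k j * scaledMonomial d j (v + t • n.mulVec v)) t

/-- The normalization turns the coefficients `k + 1` and `d - k` produced by differentiating
monomials into the common matrix entry `√((k + 1) (d - k))`. -/
theorem sqrt_choose_succ (d k : ℕ) (hk : k + 1 ≤ d) :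
    √((((k + 1 : ℕ) : ℝ)) * ((d : ℝ) - ((k + 1 : ℕ) : ℝ) + 1)) * √(d.choose k : ℝ)
      = (k + 1) * √(d.choose (k + 1) : ℝ) ∧
    √((((k + 1 : ℕ) : ℝ)) * ((d : ℝ) - ((k + 1 : ℕ) : ℝ) + 1)) * √(d.choose (k + 1) : ℝ)
      = (d - k) * √(d.choose k : ℝ) := by
  have hd : (k : ℝ) + 1 ≤ d := by exact_mod_cast hk
  have hdk : (0 : ℝ) ≤ d - k := by linarith
  have h : (d.choose (k + 1) : ℝ) * (k + 1) = d.choose k * (d - k) := by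
    have := Nat.choose_succ_right_eq d k
    rw [← Nat.cast_sub (by omega : k ≤ d)]
    exact_mod_cast this
  have e : (d : ℝ) - ((k + 1 : ℕ) : ℝ) + 1 = d - k := by push_cast; ring
  rw [e]
  constructor
  · rw [← Real.sqrt_mul (by positivity)]
    rw [Real.sqrt_eq_iff_mul_self_eq (by positivity) (by positivity)]
    rw [mul_mul_mul_comm, Real.mul_self_sqrt (by positivity)]
    push_cast
    linear_combination -(k + 1 : ℝ) * h
  · rw [← Real.sqrt_mul (by positivity)]
    rw [Real.sqrt_eq_iff_mul_self_eq (by positivity) (by positivity)]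
    rw [mul_mul_mul_comm, Real.mul_self_sqrt (by positivity)]
    push_cast
    linear_combination (d - k : ℝ) * h

theorem generates_raise (d : ℕ) : Generates (raise d) !![0, 1; 0, 0] := by
  intro k v t
  have hv : ∀ s : ℂ, v + s • (!![0, 1; 0, 0] : Matrix (Fin 2) (Fin 2) ℂ).mulVec v
      = ![v 0 + s * v 1, v 1] := by
    intro s
    ext i
    fin_cases i <;> simp [dotProduct, Fin.sum_univ_two]
  simp only [hv, scaledMonomial, Matrix.cons_val_zero, Matrix.cons_val_one]
  have hlin : HasDerivAt (fun s : ℂ => v 0 + s * v 1) (v 1) t := by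
    simpa using ((hasDerivAt_id t).mul_const (v 1)).const_add (v 0)
  refine (((hlin.pow (k : ℕ)).const_mul _).mul_const _).congr_deriv ?_
  rcases Nat.eq_zero_or_pos (k : ℕ) with h0 | h0
  · rw [Finset.sum_eq_zero]
    · simp [h0]
    · intro j _
      simp [raise, h0]
  · obtain ⟨k', hk'⟩ := Nat.exists_eq_succ_of_ne_zero h0.ne'
    have hk : k' + 1 ≤ d := by omega
    rw [Finset.sum_eq_single ⟨k', by omega⟩]
    · have h := congrArg (fun x : ℝ => (x : ℂ)) (sqrt_choose_succ d k' hk).1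
      simp only [raise, hk', if_true, Nat.succ_eq_add_one, Nat.add_sub_cancel]
      obtain ⟨e, rfl⟩ := Nat.exists_eq_add_of_le hk
      rw [show k' + 1 + e - k' = e + 1 by omega, show k' + 1 + e - (k' + 1) = e by omega]
      push_cast at h ⊢
      linear_combination - (v 0 + t * v 1) ^ k' * v 1 ^ (e + 1) * h
    · intro j _ hj
      have : ¬ ((j : ℕ) + 1 = k) := fun h => hj (Fin.ext (by simp; omega))
      simp [raise, this]
    · simp

theorem generates_lower (d : ℕ) : Generates (raise d).conjTranspose !![0, 0; 1, 0] := by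
  intro k v t
  have hv : ∀ s : ℂ, v + s • (!![0, 0; 1, 0] : Matrix (Fin 2) (Fin 2) ℂ).mulVec v
      = ![v 0, v 1 + s * v 0] := by
    intro s
    ext i
    fin_cases i <;> simp [dotProduct, Fin.sum_univ_two]
  simp only [hv, scaledMonomial, Matrix.cons_val_zero, Matrix.cons_val_one, raise_conjTranspose_apply]
  have hlin : HasDerivAt (fun s : ℂ => v 1 + s * v 0) (v 0) t := by
    simpa using ((hasDerivAt_id t).mul_const (v 0)).const_add (v 1)
  refine ((hlin.pow (d - (k : ℕ))).const_mul _).congr_deriv ?_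
  rcases Nat.eq_or_lt_of_le (Nat.le_of_lt_succ k.2) with h0 | h0
  · rw [Finset.sum_eq_zero]
    · simp [h0]
    · intro j _
      have : ¬ ((k : ℕ) + 1 = j) := by omega
      simp [raise, this]
  · rw [Finset.sum_eq_single ⟨k + 1, by omega⟩]
    · have h := congrArg (fun x : ℝ => (x : ℂ)) (sqrt_choose_succ d k h0).2
      simp only [raise, if_true]
      obtain ⟨e, he⟩ := Nat.exists_eq_add_of_le h0
      obtain ⟨k, hk⟩ := k
      simp only [Nat.succ_eq_add_one] at he
      subst he
      rw [show k + 1 + e - k = e + 1 by omega, show k + 1 + e - (k + 1) = e by omega]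
      push_cast at h ⊢
      linear_combination - v 0 ^ (k + 1) * (v 1 + t * v 0) ^ e * h
    · intro j _ hj
      have : ¬ ((k : ℕ) + 1 = j) := fun h => hj (Fin.ext (by simp; omega))
      simp [raise, this]
    · simp

/-! ### Invariance under the group and under its Lie algebra -/

/-- The derivation `ξ ↦ ∑ i, F (ξ₁, …, N ξ_i, …, ξ_m)` of an `m`-linear form along `N`. -/
noncomputable def derivForm {d m : ℕ} (N : (Fin (d + 1) → ℂ) →ₗ[ℂ] (Fin (d + 1) → ℂ))
    (F : MultilinearMap ℂ (fun _ : Fin m => (Fin (d + 1) → ℂ)) ℂ) :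
    MultilinearMap ℂ (fun _ : Fin m => (Fin (d + 1) → ℂ)) ℂ :=
  ∑ i, F.compLinearMap (Function.update (fun _ => LinearMap.id) i N)

theorem derivForm_apply {d m : ℕ} (N : (Fin (d + 1) → ℂ) →ₗ[ℂ] (Fin (d + 1) → ℂ))
    (F : MultilinearMap ℂ (fun _ : Fin m => (Fin (d + 1) → ℂ)) ℂ) (ξ : Fin m → Fin (d + 1) → ℂ) :
    derivForm N F ξ = ∑ i, F (Function.update ξ i (N (ξ i))) := by
  rw [derivForm, sum_apply]
  refine Finset.sum_congr rfl fun i _ => ?_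
  rw [MultilinearMap.compLinearMap_apply]
  congr 1
  ext j : 1
  by_cases h : j = i
  · subst h; simp
  · simp [h]

theorem multilinear_continuous {d m : ℕ}
    (F : MultilinearMap ℂ (fun _ : Fin m => (Fin (d + 1) → ℂ)) ℂ) : Continuous F := by
  let B := Basis.multilinearMap (fun _ : Fin m => formBasis d) (Module.Basis.singleton Unit ℂ)
  have hF : (F : (Fin m → Fin (d + 1) → ℂ) → ℂ) = fun ξ => ∑ w, B.repr F w * B w ξ := by
    ext ξ
    conv_lhs => rw [← B.sum_repr F]
    rw [sum_apply]
    rfl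
  rw [hF]
  refine continuous_finsetSum _ fun w _ => continuous_const.mul ?_
  have hB : (B w : (Fin m → Fin (d + 1) → ℂ) → ℂ)
      = fun ξ => ∏ i, (formBasis d).repr (ξ i) (w.1 i) := by
    ext ξ
    simp [B, Basis.multilinearMap_apply_apply]
  rw [hB]
  refine continuous_finsetProd _ fun i _ => ?_
  exact (LinearMap.continuous_of_finiteDimensional ((formBasis d).coord (w.1 i))).comp
    (continuous_apply i)

/-- The one-parameter group `exp (t N)` with `N = matOp A`. -/
noncomputable def flow {d : ℕ} (A : Matrix (Fin (d + 1)) (Fin (d + 1)) ℂ) (t : ℂ) :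
    (Fin (d + 1) → ℂ) →L[ℂ] (Fin (d + 1) → ℂ) :=
  NormedSpace.exp (t • LinearMap.toContinuousLinearMap (matOp A))

theorem flow_zero {d : ℕ} (A : Matrix (Fin (d + 1)) (Fin (d + 1)) ℂ) (ξ : Fin (d + 1) → ℂ) :
    flow A 0 ξ = ξ := by
  have h : (0 : ℂ) • LinearMap.toContinuousLinearMap (matOp A) = 0 := by
    ext
    simp
  rw [flow, h, NormedSpace.exp_zero]
  rfl

theorem hasDerivAt_flow {d : ℕ} (A : Matrix (Fin (d + 1)) (Fin (d + 1)) ℂ)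
    (ξ : Fin (d + 1) → ℂ) (t : ℂ) :
    HasDerivAt (fun s => flow A s ξ) (matOp A (flow A t ξ)) t := by
  have h := hasDerivAt_exp_smul_const' (𝕂 := ℂ) (LinearMap.toContinuousLinearMap (matOp A)) t
  exact ((ContinuousLinearMap.apply ℂ (Fin (d + 1) → ℂ) ξ).hasFDerivAt.comp_hasDerivAt t h)

theorem hasDerivAt_form_flow {d m : ℕ} (A : Matrix (Fin (d + 1)) (Fin (d + 1)) ℂ)
    (F : MultilinearMap ℂ (fun _ : Fin m => (Fin (d + 1) → ℂ)) ℂ)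
    (ξ : Fin m → Fin (d + 1) → ℂ) (t : ℂ) :
    HasDerivAt (fun s => F fun i => flow A s (ξ i))
      (derivForm (matOp A) F fun i => flow A t (ξ i)) t := by
  let Fc : ContinuousMultilinearMap ℂ (fun _ : Fin m => (Fin (d + 1) → ℂ)) ℂ :=
    { F with cont := multilinear_continuous F }
  have h := HasFDerivAt.multilinear_comp (f := Fc)
    (fun i => (hasDerivAt_flow A (ξ i) t).hasFDerivAt)
  have h2 := h.hasDerivAt
  rw [derivForm_apply]
  refine h2.congr_deriv ?_
  simp [Fc]
  rfl

/-- The flow of an infinitesimal generator is the substitution action: the function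
`s ↦ (exp (s N) ξ) (v + (t - s) n v)` has derivative zero, and its values at `s = t` and `s = 0`
are the two sides. -/
theorem Pval_flow {d : ℕ} {A : Matrix (Fin (d + 1)) (Fin (d + 1)) ℂ}
    {n : Matrix (Fin 2) (Fin 2) ℂ} (hA : Generates A n) (t : ℂ) (ξ : Fin (d + 1) → ℂ)
    (v : Fin 2 → ℂ) : Pval d (flow A t ξ) v = Pval d ξ (v + t • n.mulVec v) := by
  let φ : ℂ → ℂ := fun s => Pval d (flow A s ξ) (v + (t - s) • n.mulVec v)
  have hφ : ∀ s, HasDerivAt φ 0 s := by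
    intro s
    have hx : ∀ k, HasDerivAt (fun s => (formBasis d).repr (flow A s ξ) k)
        ((formBasis d).repr (matOp A (flow A s ξ)) k) s := fun k =>
      (LinearMap.toContinuousLinearMap ((formBasis d).coord k)).hasFDerivAt.comp_hasDerivAt s
        (hasDerivAt_flow A ξ s)
    have hq : ∀ k : Fin (d + 1), HasDerivAt (fun s => scaledMonomial d k (v + (t - s) • n.mulVec v))
        (-∑ j, A k j * scaledMonomial d j (v + (t - s) • n.mulVec v)) s := by
      intro k
      have h1 : HasDerivAt (fun s : ℂ => t - s) (-1) s := by
        simpa using (hasDerivAt_id s).const_sub t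
      have := HasDerivAt.comp s (hA k v (t - s)) h1
      refine this.congr_deriv ?_
      rw [mul_neg, mul_one]
    have hs := HasDerivAt.fun_sum (u := Finset.univ) fun k _ => (hx k).mul (hq k)
    have he : φ = fun s => ∑ k, (formBasis d).repr (flow A s ξ) k
        * scaledMonomial d k (v + (t - s) • n.mulVec v) := by
      ext s
      exact Pval_eq _ _ _
    rw [he]
    refine hs.congr_deriv ?_
    rw [Finset.sum_add_distrib, ← Pval_eq, Pval_matOp]
    simp
  have := is_const_of_deriv_eq_zero (fun s => (hφ s).differentiableAt) (fun s => (hφ s).deriv) t 0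
  simpa only [φ, flow_zero, sub_self, zero_smul, add_zero, sub_zero] using this

theorem derivForm_eq_zero_of_invariant {d m : ℕ} {A : Matrix (Fin (d + 1)) (Fin (d + 1)) ℂ}
    {n : Matrix (Fin 2) (Fin 2) ℂ} (hA : Generates A n) (hn : ∀ t : ℂ, (1 + t • n).det = 1)
    {F : MultilinearMap ℂ (fun _ : Fin m => (Fin (d + 1) → ℂ)) ℂ} (hF : F ∈ invariantForms d m) :
    derivForm (matOp A) F = 0 := by
  refine MultilinearMap.ext fun ξ => ?_
  have hc : (fun s => F fun i => flow A s (ξ i)) = fun _ => F ξ := by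
    ext s
    let g : Matrix.SpecialLinearGroup (Fin 2) ℂ := ⟨1 + s • n, hn s⟩
    refine hF g⁻¹ ξ _ fun i v => ?_
    have hg : (g : Matrix (Fin 2) (Fin 2) ℂ) = 1 + s • n := rfl
    rw [inv_inv, Pval_flow hA, hg, Matrix.add_mulVec, Matrix.one_mulVec, Matrix.smul_mulVec]
  have h := hasDerivAt_form_flow A F ξ 0
  rw [hc] at h
  have := h.unique (hasDerivAt_const _ _)
  simpa [flow_zero] using this

/-- Substituting `M` into forms is realized by a map `T` on coefficient vectors that leaves `F`
unchanged. Requiring the existence of `T` makes this property multiplicative in `M`. -/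
def Preserves {d m : ℕ} (F : MultilinearMap ℂ (fun _ : Fin m => (Fin (d + 1) → ℂ)) ℂ)
    (M : Matrix (Fin 2) (Fin 2) ℂ) : Prop :=
  ∃ T : (Fin (d + 1) → ℂ) → (Fin (d + 1) → ℂ),
    (∀ ξ v, Pval d (T ξ) v = Pval d ξ (M.mulVec v)) ∧ ∀ ξ : Fin m → _, F (fun i => T (ξ i)) = F ξ

theorem Preserves.mul {d m : ℕ} {F : MultilinearMap ℂ (fun _ : Fin m => (Fin (d + 1) → ℂ)) ℂ}
    {M₁ M₂ : Matrix (Fin 2) (Fin 2) ℂ} (h₁ : Preserves F M₁) (h₂ : Preserves F M₂) :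
    Preserves F (M₁ * M₂) := by
  obtain ⟨T₁, h₁, h₁'⟩ := h₁
  obtain ⟨T₂, h₂, h₂'⟩ := h₂
  refine ⟨fun ξ => T₂ (T₁ ξ), fun ξ v => ?_, fun ξ => ?_⟩
  · rw [h₂, h₁, Matrix.mulVec_mulVec]
  · rw [h₂' fun i => T₁ (ξ i), h₁']

theorem preserves_of_derivForm {d m : ℕ} {A : Matrix (Fin (d + 1)) (Fin (d + 1)) ℂ}
    {n : Matrix (Fin 2) (Fin 2) ℂ} (hA : Generates A n)
    {F : MultilinearMap ℂ (fun _ : Fin m => (Fin (d + 1) → ℂ)) ℂ}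
    (hF : derivForm (matOp A) F = 0) (t : ℂ) : Preserves F (1 + t • n) := by
  refine ⟨flow A t, fun ξ v => ?_, fun ξ => ?_⟩
  · rw [Pval_flow hA]
    simp [Matrix.add_mulVec, Matrix.smul_mulVec]
  · have hd : ∀ s, HasDerivAt (fun s => F fun i => flow A s (ξ i)) 0 s := fun s => by
      simpa [hF] using hasDerivAt_form_flow A F ξ s
    have := is_const_of_deriv_eq_zero (fun s => (hd s).differentiableAt) (fun s => (hd s).deriv) t 0
    simpa [flow_zero] using this

/-- `SL(2, ℂ)` is generated by its upper and lower unipotent matrices. -/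
theorem preserves_of_det_eq_one {d m : ℕ}
    {F : MultilinearMap ℂ (fun _ : Fin m => (Fin (d + 1) → ℂ)) ℂ}
    (hu : ∀ t : ℂ, Preserves F (1 + t • !![0, 1; 0, 0]))
    (hl : ∀ t : ℂ, Preserves F (1 + t • !![0, 0; 1, 0]))
    (M : Matrix (Fin 2) (Fin 2) ℂ) (hM : M.det = 1) : Preserves F M := by
  have key : ∀ M : Matrix (Fin 2) (Fin 2) ℂ, M.det = 1 → M 1 0 ≠ 0 → Preserves F M := by
    intro M hM hc
    -- a determinant-one matrix with nonzero lower left entry is upper * lower * upper unipotent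
    have := ((hu ((M 0 0 - 1) / M 1 0)).mul (hl (M 1 0))).mul (hu ((M 1 1 - 1) / M 1 0))
    convert this using 1
    rw [Matrix.det_fin_two] at hM
    ext i j
    fin_cases i <;> fin_cases j <;> simp [Matrix.mul_apply, Fin.sum_univ_two] <;> field_simp <;>
      first | done | linear_combination -hM | ring
  by_cases hc : M 1 0 = 0
  · have h11 : M 1 1 ≠ 0 := by
      intro h
      simp [Matrix.det_fin_two, hc, h] at hM
    -- a lower unipotent factor makes the lower left entry nonzero
    have h1 : Preserves F (M * (1 + (1 : ℂ) • !![0, 0; 1, 0])) := by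
      apply key
      · rw [Matrix.det_mul, hM]
        simp [Matrix.det_fin_two]
      · simpa [Matrix.mul_apply, Fin.sum_univ_two, hc] using h11
    have := h1.mul (hl (-1))
    convert this using 1
    ext i j
    fin_cases i <;> fin_cases j <;> simp [Matrix.mul_apply, Fin.sum_univ_two]
  · exact key M hM hc

theorem mem_invariantForms_iff {d m : ℕ}
    (F : MultilinearMap ℂ (fun _ : Fin m => (Fin (d + 1) → ℂ)) ℂ) :
    F ∈ invariantForms d m ↔
      derivForm (matOp (raise d)) F = 0 ∧ derivForm (matOp (raise d).conjTranspose) F = 0 := by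
  constructor
  · intro hF
    exact ⟨derivForm_eq_zero_of_invariant (generates_raise d)
        (fun t => by simp [Matrix.det_fin_two]) hF,
      derivForm_eq_zero_of_invariant (generates_lower d)
        (fun t => by simp [Matrix.det_fin_two]) hF⟩
  · rintro ⟨h1, h2⟩ g ξ η h
    obtain ⟨T, hT, hTval⟩ := preserves_of_det_eq_one (preserves_of_derivForm (generates_raise d) h1)
      (preserves_of_derivForm (generates_lower d) h2) _ (g⁻¹).2
    have : η = fun i => T (ξ i) := funext fun i => Pval_injective d fun v => by rw [h, hT]
    rw [this, hTval]

/-- The values of an `m`-linear form on words in the normalized monomial basis. -/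
noncomputable def coeffs (d m : ℕ) : MultilinearMap ℂ (fun _ : Fin m => (Fin (d + 1) → ℂ)) ℂ →ₗ[ℂ]
    ((Fin m → Fin (d + 1)) → ℂ) where
  toFun F w := F fun i => formBasis d (w i)
  map_add' _ _ := rfl
  map_smul' _ _ := rfl

theorem coeffs_injective (d m : ℕ) : Function.Injective (coeffs d m) := fun _ _ h =>
  Module.Basis.ext_multilinear (fun _ => formBasis d) fun w => congrFun h w

theorem coeffs_surjective (d m : ℕ) : Function.Surjective (coeffs d m) := by
  let B := Basis.multilinearMap (fun _ : Fin m => formBasis d) (Module.Basis.singleton Unit ℂ)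
  have := Module.Finite.of_basis B
  refine (LinearMap.injective_iff_surjective_of_finrank_eq_finrank ?_).mp (coeffs_injective d m)
  rw [Module.finrank_eq_card_basis B, Module.finrank_fintype_fun_eq_card]
  simp

theorem coeffs_derivForm {d m : ℕ} (A : Matrix (Fin (d + 1)) (Fin (d + 1)) ℂ)
    (F : MultilinearMap ℂ (fun _ : Fin m => (Fin (d + 1) → ℂ)) ℂ) :
    coeffs d m (derivForm (matOp A) F) = total m A (coeffs d m F) := by
  ext w
  rw [total_apply_apply]
  change derivForm (matOp A) F (fun i => formBasis d (w i)) = _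
  rw [derivForm_apply]
  refine Finset.sum_congr rfl fun i _ => ?_
  rw [matOp_basis, MultilinearMap.map_update_sum]
  refine Finset.sum_congr rfl fun k _ => ?_
  rw [MultilinearMap.map_update_smul, smul_eq_mul]
  congr 1
  change _ = F fun j => formBasis d (Function.update w i k j)
  congr 1
  ext j : 1
  by_cases h : j = i
  · subst h; simp
  · simp [h]

theorem map_coeffs_invariantForms (d m : ℕ) :
    (invariantForms d m).map (coeffs d m) =
      LinearMap.ker (total m (raise d)) ⊓ LinearMap.ker (total m (raise d).conjTranspose) := by
  have h0 : ∀ F, coeffs d m F = 0 ↔ F = 0 := fun F =>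
    map_eq_zero_iff _ (coeffs_injective d m)
  ext c
  obtain ⟨F, rfl⟩ := coeffs_surjective d m c
  simp only [Submodule.mem_map, (coeffs_injective d m).eq_iff, exists_eq_right, Submodule.mem_inf, LinearMap.mem_ker,
    ← coeffs_derivForm, h0, mem_invariantForms_iff]

/-- The dimension of the invariants is the number of words of weight `0` minus the number of words of
weight `2`. -/
theorem finrank_invariantForms (d m : ℕ) :
    Module.finrank ℂ (invariantForms d m)
      + Fintype.card {w : Fin m → Fin (d + 1) // weight w = 2}
      = Fintype.card {w : Fin m → Fin (d + 1) // weight w = 0} := by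
  rw [← finrank_ker_inf_ker weight (total m (raise d)) (total m (raise d).conjTranspose)
    (total_adjoint _) (fun u v => by
      conv_lhs => rw [← Matrix.conjTranspose_conjTranspose (raise d)]
      exact total_adjoint _ u v)
    total_raise_commutator total_raise_weight total_lower_weight, ← map_coeffs_invariantForms,
    ((invariantForms d m).equivMapOfInjective _ (coeffs_injective d m)).finrank_eq]

/-! ### The character integral -/

/-- The character of `R_d` on the maximal torus, the continuous extension of
`sin ((d + 1) x) / sin x`. -/
noncomputable def character (d : ℕ) (x : ℝ) : ℝ :=
  ∑ k : Fin (d + 1), Real.cos ((2 * ((k : ℕ) : ℝ) - d) * x)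

theorem continuous_character (d : ℕ) : Continuous (character d) := by
  unfold character
  fun_prop

theorem abs_character_le (d : ℕ) (x : ℝ) : |character d x| ≤ d + 1 := by
  refine (Finset.abs_sum_le_sum_abs _ _).trans ?_
  refine (Finset.sum_le_sum fun k _ => Real.abs_cos_le_one _).trans ?_
  simp

theorem character_mul_sin (d : ℕ) (x : ℝ) :
    character d x * Real.sin x = Real.sin (((d : ℝ) + 1) * x) := by
  have h : ∀ k : ℕ, Real.cos ((2 * (k : ℝ) - d) * x) * Real.sin x
      = Real.sin ((2 * ((k + 1 : ℕ) : ℝ) - d - 1) * x) / 2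
        - Real.sin ((2 * (k : ℝ) - d - 1) * x) / 2 := by
    intro k
    have e1 : (2 * ((k + 1 : ℕ) : ℝ) - d - 1) * x = (2 * (k : ℝ) - d) * x + x := by
      push_cast; ring
    have e2 : (2 * (k : ℝ) - d - 1) * x = (2 * (k : ℝ) - d) * x - x := by ring
    rw [e1, e2, Real.sin_add, Real.sin_sub]
    ring
  rw [character, Finset.sum_mul,
    Fin.sum_univ_eq_sum_range (fun k => Real.cos ((2 * (k : ℝ) - d) * x) * Real.sin x) (d + 1),
    Finset.sum_congr rfl fun k _ => h k,
    Finset.sum_range_sub (fun k : ℕ => Real.sin ((2 * (k : ℝ) - d - 1) * x) / 2)]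
  have e1 : (2 * ((d + 1 : ℕ) : ℝ) - d - 1) * x = ((d : ℝ) + 1) * x := by push_cast; ring
  have e2 : (2 * ((0 : ℕ) : ℝ) - d - 1) * x = -(((d : ℝ) + 1) * x) := by push_cast; ring
  rw [e1, e2, Real.sin_neg]
  ring

theorem sum_sin_eq_zero (d : ℕ) (x : ℝ) :
    ∑ k : Fin (d + 1), Real.sin ((2 * ((k : ℕ) : ℝ) - d) * x) = 0 := by
  have h : ∑ k : Fin (d + 1), Real.sin ((2 * ((k : ℕ) : ℝ) - d) * x)
      = - ∑ k : Fin (d + 1), Real.sin ((2 * ((k : ℕ) : ℝ) - d) * x) := by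
    rw [← Finset.sum_neg_distrib, ← Equiv.sum_comp Fin.revPerm]
    refine Finset.sum_congr rfl fun k _ => ?_
    rw [← Real.sin_neg, Fin.revPerm_apply, Fin.val_rev]
    congr 1
    rw [Nat.add_sub_add_right, Nat.cast_sub (Nat.le_of_lt_succ k.2)]
    ring
  linarith

theorem character_pow (d m : ℕ) (x : ℝ) :
    character d x ^ m = ∑ w : Fin m → Fin (d + 1), Real.cos ((weight w : ℝ) * x) := by
  have h : (character d x : ℂ)
      = ∑ k : Fin (d + 1), Complex.exp ((((2 * ((k : ℕ) : ℝ) - d) * x : ℝ) : ℂ) * Complex.I) := by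
    simp only [Complex.exp_mul_I, Finset.sum_add_distrib, ← Finset.sum_mul, ← Complex.ofReal_cos,
      ← Complex.ofReal_sin, ← Complex.ofReal_sum, sum_sin_eq_zero]
    simp [character]
  have h2 : ((character d x ^ m : ℝ) : ℂ)
      = ∑ w : Fin m → Fin (d + 1), Complex.exp ((((weight w : ℝ) * x : ℝ) : ℂ) * Complex.I) := by
    rw [Complex.ofReal_pow, h, Fintype.sum_pow]
    refine Finset.sum_congr rfl fun w _ => ?_
    rw [← Complex.exp_sum, ← Finset.sum_mul, ← Complex.ofReal_sum, ← Finset.sum_mul, weight]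
    push_cast
    rfl
  have h3 := congrArg Complex.re h2
  rw [Complex.ofReal_re, Complex.re_sum] at h3
  rw [h3]
  exact Finset.sum_congr rfl fun w _ => Complex.exp_ofReal_mul_I_re _

theorem integral_cos_int (n : ℤ) :
    ∫ x in (0 : ℝ)..Real.pi, Real.cos ((n : ℝ) * x) = if n = 0 then Real.pi else 0 := by
  split_ifs with h
  · simp [h]
  · have hn : (n : ℝ) ≠ 0 := by exact_mod_cast h
    rw [intervalIntegral.integral_comp_mul_left (fun x => Real.cos x) hn]
    simp [Real.sin_int_mul_pi]

theorem integral_sin_sq_cos (n : ℤ) :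
    ∫ x in (0 : ℝ)..Real.pi, Real.sin x ^ 2 * Real.cos ((n : ℝ) * x) =
      Real.pi / 2 * ((if n = 0 then 1 else 0)
        - ((if n = 2 then 1 else 0) + (if n = -2 then 1 else 0)) / 2) := by
  have h : ∀ x : ℝ, Real.sin x ^ 2 * Real.cos ((n : ℝ) * x)
      = 1 / 2 * Real.cos ((n : ℝ) * x) - (1 / 4 * Real.cos (((n - 2 : ℤ) : ℝ) * x)
        + 1 / 4 * Real.cos (((n + 2 : ℤ) : ℝ) * x)) := by
    intro x
    have e1 : ((n - 2 : ℤ) : ℝ) * x = (n : ℝ) * x - 2 * x := by push_cast; ring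
    have e2 : ((n + 2 : ℤ) : ℝ) * x = (n : ℝ) * x + 2 * x := by push_cast; ring
    rw [e1, e2, Real.cos_add, Real.cos_sub, Real.sin_sq_eq_half_sub]
    ring
  have hi : ∀ (r : ℝ) (k : ℤ), IntervalIntegrable (fun x : ℝ => r * Real.cos ((k : ℝ) * x))
      MeasureTheory.volume 0 Real.pi := fun r k =>
    Continuous.intervalIntegrable (by fun_prop) _ _
  simp only [h]
  rw [intervalIntegral.integral_sub (hi _ _) ((hi _ _).add (hi _ _)),
    intervalIntegral.integral_add (hi _ _) (hi _ _)]
  simp only [intervalIntegral.integral_const_mul, integral_cos_int]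
  simp only [sub_eq_zero, add_eq_zero_iff_eq_neg]
  split_ifs <;> ring

/-- Reversing the alphabet negates the weight. -/
theorem card_weight_neg (d m : ℕ) (a : ℤ) :
    Fintype.card {w : Fin m → Fin (d + 1) // weight w = -a}
      = Fintype.card {w : Fin m → Fin (d + 1) // weight w = a} := by
  refine Fintype.card_congr (Equiv.subtypeEquiv (Equiv.arrowCongr (Equiv.refl _) Fin.revPerm) ?_)
  intro w
  have : weight (Equiv.arrowCongr (Equiv.refl (Fin m)) Fin.revPerm w) = - weight w := by
    rw [weight, weight, ← Finset.sum_neg_distrib]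
    refine Finset.sum_congr rfl fun i _ => ?_
    have := (w i).2
    simp only [Equiv.arrowCongr_apply, Function.comp, Equiv.refl_symm, Equiv.refl_apply,
      Fin.revPerm_apply, Fin.val_rev]
    omega
  rw [this]
  omega

theorem integral_character_pow (d m : ℕ) :
    2 / Real.pi * ∫ x in (0 : ℝ)..Real.pi, Real.sin x ^ 2 * character d x ^ m =
      (Fintype.card {w : Fin m → Fin (d + 1) // weight w = 0} : ℝ)
        - Fintype.card {w : Fin m → Fin (d + 1) // weight w = 2} := by
  simp only [character_pow, Finset.mul_sum]
  rw [intervalIntegral.integral_finsetSum fun w _ =>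
    Continuous.intervalIntegrable (by fun_prop) _ _]
  simp only [integral_sin_sq_cos]
  rw [← Finset.mul_sum, Finset.sum_sub_distrib, ← Finset.sum_div, Finset.sum_add_distrib]
  have hc : ∀ a : ℤ, (∑ w : Fin m → Fin (d + 1), if weight w = a then (1 : ℝ) else 0)
      = Fintype.card {w : Fin m → Fin (d + 1) // weight w = a} := by
    intro a
    rw [Finset.sum_boole, Fintype.card_subtype]
  rw [hc, hc, hc, card_weight_neg]
  field_simp
  ring

theorem hasSum_integral_character (d : ℕ) (z : ℝ) (hz : |z| < 1 / ((d : ℝ) + 1)) :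
    HasSum (fun m : ℕ => ∫ x in (0 : ℝ)..Real.pi, Real.sin x ^ 2 * (z * character d x) ^ m)
      (∫ x in (0 : ℝ)..Real.pi, Real.sin x ^ 2 / (1 - z * character d x)) := by
  have hr : |z| * (d + 1) < 1 := by
    rwa [lt_div_iff₀ (by positivity)] at hz
  have hr0 : 0 ≤ |z| * (d + 1) := by positivity
  have hle : ∀ x, |z * character d x| ≤ |z| * (d + 1) := fun x => by
    rw [abs_mul]
    exact mul_le_mul_of_nonneg_left (abs_character_le d x) (abs_nonneg z)
  have hcont := continuous_character d
  refine intervalIntegral.hasSum_integral_of_dominated_convergence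
    (fun m _ => (|z| * (d + 1)) ^ m) ?_ ?_ ?_ ?_ ?_
  · intro m
    exact Continuous.aestronglyMeasurable (by fun_prop)
  · intro m
    refine Filter.Eventually.of_forall fun x _ => ?_
    rw [Real.norm_eq_abs, abs_mul, abs_pow, abs_pow]
    calc |Real.sin x| ^ 2 * |z * character d x| ^ m ≤ 1 * (|z| * (d + 1)) ^ m := by
          gcongr
          · exact pow_le_one₀ (abs_nonneg _) (Real.abs_sin_le_one x)
          · exact hle x
      _ = _ := one_mul _
  · exact Filter.Eventually.of_forall fun x _ => summable_geometric_of_lt_one hr0 hr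
  · exact intervalIntegrable_const
  · refine Filter.Eventually.of_forall fun x _ => ?_
    rw [div_eq_mul_inv]
    exact (hasSum_geometric_of_abs_lt_one ((hle x).trans_lt hr)).mul_left _

/-- **Molien–Weyl formula for noncommutative invariants.**
With `d_m = dim T^m(R_d^*)^G` the dimension of the space of `SL(2,ℂ)`-invariant
`m`-linear forms on binary forms of degree `d`, for every real `z` with `|z| < 1/(d+1)`
the Hilbert–Poincaré series `H_d(z) = Σ_m d_m z^m` converges and equals
`(2/π) ∫₀^π sin²x / (1 − z·sin((d+1)x)/sin x) dx`. -/
theorem hilbert_series_eq_integral (d : ℕ) (hd : 1 ≤ d) (z : ℝ)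
    (hz : |z| < 1 / ((d : ℝ) + 1)) :
    HasSum (fun m : ℕ => (Module.finrank ℂ (invariantForms d m) : ℝ) * z ^ m)
      ((2 / Real.pi) * ∫ x in (0:ℝ)..Real.pi,
        Real.sin x ^ 2 / (1 - z * (Real.sin (((d : ℝ) + 1) * x) / Real.sin x))) := by
  -- Where `sin x = 0` both integrands have numerator `0`, so the junk value of the quotient
  -- `sin ((d + 1) x) / sin x` at the endpoints is harmless.
  have hint : ∀ x : ℝ, Real.sin x ^ 2 / (1 - z * (Real.sin (((d : ℝ) + 1) * x) / Real.sin x))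
      = Real.sin x ^ 2 / (1 - z * character d x) := by
    intro x
    by_cases hx : Real.sin x = 0
    · simp [hx]
    · rw [← character_mul_sin, mul_div_cancel_right₀ _ hx]
  simp only [hint]
  have hterm : (fun m : ℕ => (Module.finrank ℂ (invariantForms d m) : ℝ) * z ^ m) = fun m : ℕ =>
      2 / Real.pi * ∫ x in (0 : ℝ)..Real.pi, Real.sin x ^ 2 * (z * character d x) ^ m := by
    ext m
    have hdim : (Module.finrank ℂ (invariantForms d m) : ℝ)
        = 2 / Real.pi * ∫ x in (0 : ℝ)..Real.pi, Real.sin x ^ 2 * character d x ^ m := by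
      rw [integral_character_pow, ← finrank_invariantForms d m]
      push_cast
      ring
    rw [hdim, mul_assoc, ← intervalIntegral.integral_mul_const]
    simp only [mul_pow, mul_assoc, mul_comm (z ^ m)]
  rw [hterm]
  exact (hasSum_integral_character d z hz).mul_left (2 / Real.pi)
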